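/- Define H_n(v) = ( |Σ_{i=1}^{k_n} ε_{n,i}(μ_{n,i}((0,v]) − v)| + |Σ_{i=1}^{k_n} ε_{n,i}(μ_{n,i}((1−v,1)) − v)| ) / √(k_n v) for v ∈ (0,1/2). If (v_n) is a sequence in (0,1/2) such that a_n^{−1}·H_n(v_n) → ∞ and liminf_{n→∞} k_n v_n > 0, then a_n·HC_n − b_n → ∞ in Q_(n)-probability; i.e., for every C ∈ ℝ, Q_(n)(a_n·HC_n − b_n ≤ C) → 0. -/

import Mathlib

open MeasureTheory Filter Topology

noncomputable section

/-- Mixture `Q = (1-e)·P + e·μ`. -/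
def Qmix {α : Type*} [MeasurableSpace α] (P μ : Measure α) (e : ℝ) : Measure α :=
  (ENNReal.ofReal (1 - e)) • P + (ENNReal.ofReal e) • μ

/-- The uniform distribution on `(0,1)`. -/
def unif : Measure ℝ := volume.restrict (Set.Ioo 0 1)

/-- Empirical distribution function of `y : Fin k → ℝ` at `t`. -/
def empCdf (k : ℕ) (y : Fin k → ℝ) (t : ℝ) : ℝ :=
  (∑ i : Fin k, if y i ≤ t then (1 : ℝ) else 0) / k

/-- Higher criticism statistic
`HC = sup_{t ∈ (0,1)} |√k (𝔽(t) − t) / √(t(1−t))|`. -/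
def HCstat (k : ℕ) (y : Fin k → ℝ) : ℝ :=
  ⨆ t : Set.Ioo (0 : ℝ) 1,
    |Real.sqrt k * (empCdf k y t.1 - t.1) / Real.sqrt (t.1 * (1 - t.1))|

/-- Normalising constant `a_n = √(2 log log k_n)`. -/
def aHC (k : ℕ) : ℝ := Real.sqrt (2 * Real.log (Real.log k))

/-- Normalising constant
`b_n = 2 log log k_n + (1/2) log log log k_n − (1/2) log π`. -/
def bHC (k : ℕ) : ℝ :=
  2 * Real.log (Real.log k) + (1 / 2) * Real.log (Real.log (Real.log k)) -
    (1 / 2) * Real.log Real.pi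

/-- `H_n(v)` from Theorem 3.1/3.2. -/
def Hfun (μ : ℕ → ℕ → Measure ℝ) (ε : ℕ → ℕ → ℝ) (k : ℕ → ℕ) (n : ℕ) (v : ℝ) : ℝ :=
  (|∑ i ∈ Finset.range (k n), ε n i * (((μ n i) (Set.Ioc 0 v)).toReal - v)| +
   |∑ i ∈ Finset.range (k n), ε n i * (((μ n i) (Set.Ioo (1 - v) 1)).toReal - v)|) /
    Real.sqrt (k n * v)

/-- Product null measure (product of uniforms). -/
def PprodU (k : ℕ → ℕ) (n : ℕ) : Measure (Fin (k n) → ℝ) :=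
  Measure.pi (fun _ => unif)

/-- Product alternative measure `Q_(n)`. -/
def QprodU (μ : ℕ → ℕ → Measure ℝ) (ε : ℕ → ℕ → ℝ) (k : ℕ → ℕ) (n : ℕ) :
    Measure (Fin (k n) → ℝ) :=
  Measure.pi (fun i => Qmix unif (μ n i) (ε n i))

end
theorem aux_cheb {K : ℕ} (Q : Fin K → Measure ℝ) [∀ i, IsProbabilityMeasure (Q i)]
    (A : Set ℝ) (hA : MeasurableSet A) (r : ℝ) (hr : 0 < r) :
    (Measure.pi Q {y | r ≤ |∑ i, A.indicator (fun _ => (1 : ℝ)) (y i)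
      - ∑ i, (Q i).real A|}).toReal ≤ (∑ i, (Q i).real A) / r ^ 2 := by
  have hm : ∀ i, MemLp (A.indicator (fun _ => (1 : ℝ))) 2 (Q i) := fun i =>
    (memLp_const (1 : ℝ)).indicator hA
  have hm' : ∀ i, MemLp (fun y : Fin K → ℝ => A.indicator (fun _ => (1 : ℝ)) (y i)) 2
      (Measure.pi Q) := fun i =>
    (hm i).comp_measurePreserving (measurePreserving_eval Q i)
  have hint : ∀ i, ∫ y, A.indicator (fun _ => (1 : ℝ)) (y i) ∂(Measure.pi Q)
      = (Q i).real A := by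
    intro i
    rw [integral_comp_eval (μ := Q) (i := i) (f := A.indicator (fun _ => (1 : ℝ)))
      (hm i).aestronglyMeasurable]
    exact integral_indicator_one hA
  have hmean : ∫ y, (∑ i, fun y : Fin K → ℝ => A.indicator (fun _ => (1 : ℝ)) (y i)) y
      ∂(Measure.pi Q) = ∑ i, (Q i).real A := by
    simp only [Finset.sum_apply]
    rw [integral_finsetSum _ (fun i _ => (hm' i).integrable (by norm_num))]
    exact Finset.sum_congr rfl (fun i _ => hint i)
  have hvar : ProbabilityTheory.variance
      (∑ i, fun y : Fin K → ℝ => A.indicator (fun _ => (1 : ℝ)) (y i)) (Measure.pi Q)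
      ≤ ∑ i, (Q i).real A := by
    rw [ProbabilityTheory.variance_sum_pi hm]
    refine Finset.sum_le_sum fun i _ => ?_
    refine (ProbabilityTheory.variance_le_expectation_sq (hm i).aestronglyMeasurable).trans ?_
    have : (A.indicator (fun _ => (1 : ℝ))) ^ 2 = A.indicator 1 := by
      ext x
      by_cases hx : x ∈ A <;> simp [hx]
    rw [this, integral_indicator_one hA]
  have key := ProbabilityTheory.meas_ge_le_variance_div_sq
    (memLp_finsetSum' Finset.univ (fun i _ => hm' i)) hr
  rw [hmean] at key
  simp only [Finset.sum_apply] at key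
  have h0 : 0 ≤ (∑ i, (Q i).real A) / r ^ 2 := by positivity
  refine ENNReal.toReal_le_of_le_ofReal h0 (key.trans (ENNReal.ofReal_le_ofReal ?_))
  gcongr

theorem aux_core {K : ℕ} (Q : Fin K → Measure ℝ) [∀ i, IsProbabilityMeasure (Q i)]
    (A : Set ℝ) (hA : MeasurableSet A) (v D a H c : ℝ) (hc : 0 < c) (hcv : c ≤ K * v)
    (hsum : ∑ i, (Q i).real A = K * v + D) (hH : 0 < H) (hHa : 8 * a ≤ H)
    (hD : H / 2 * √(K * v) ≤ |D|) (E : Set (Fin K → ℝ))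
    (hE : ∀ᵐ y ∂(Measure.pi Q), y ∈ E →
      |∑ i, A.indicator (fun _ => (1 : ℝ)) (y i) - K * v| ≤ 2 * a * √(K * v)) :
    (Measure.pi Q E).toReal ≤ 16 / H ^ 2 + 8 / (H * √c) := by
  have hx : 0 < K * v := hc.trans_le hcv
  set x := K * v with hxdef
  have hs : 0 < √x := Real.sqrt_pos.2 hx
  have hsc : 0 < √c := Real.sqrt_pos.2 hc
  have hss : √c ≤ √x := Real.sqrt_le_sqrt hcv
  have hDpos : 0 < |D| := lt_of_lt_of_le (by positivity) hD
  have h1 := aux_cheb Q A hA (|D| / 2) (by positivity)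
  rw [hsum] at h1
  have h2 : (Measure.pi Q E).toReal ≤ (Measure.pi Q {y | |D| / 2 ≤
      |∑ i, A.indicator (fun _ => (1 : ℝ)) (y i) - (x + D)|}).toReal := by
    refine ENNReal.toReal_mono (measure_ne_top _ _) (measure_mono_ae ?_)
    filter_upwards [hE] with y hy hyE
    have h3 := hy hyE
    have h4 : 2 * a * √x ≤ |D| / 2 := by nlinarith
    change |D| / 2 ≤ |_|
    have h5 := abs_sub_abs_le_abs_sub D (∑ i, A.indicator (fun _ => (1 : ℝ)) (y i) - x)
    rw [abs_sub_comm D] at h5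
    rw [show (∑ i, A.indicator (fun _ => (1 : ℝ)) (y i) - (x + D)) =
      ∑ i, A.indicator (fun _ => (1 : ℝ)) (y i) - x - D by ring]
    linarith
  refine (h2.trans h1).trans ?_
  have h6 : (x + D) / (|D| / 2) ^ 2 ≤ 4 * x / |D| ^ 2 + 4 / |D| := by
    have : 4 * x / |D| ^ 2 + 4 / |D| = (x + |D|) / (|D| / 2) ^ 2 := by
      field_simp
      norm_num
    rw [this]
    gcongr
    exact le_abs_self D
  refine h6.trans (add_le_add ?_ ?_)
  · rw [div_le_div_iff₀ (by positivity) (by positivity)]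
    have : (H / 2 * √x) ^ 2 ≤ |D| ^ 2 := by gcongr
    rw [mul_pow, Real.sq_sqrt hx.le] at this
    nlinarith
  · rw [div_le_div_iff₀ (by positivity) (by positivity)]
    have : H * √c ≤ H * √x := by gcongr
    linarith

theorem aux_bdd {K : ℕ} (y : Fin K → ℝ) (hy : ∀ i, y i ∈ Set.Ioo (0 : ℝ) 1) :
    BddAbove (Set.range fun t : Set.Ioo (0 : ℝ) 1 =>
      |Real.sqrt K * (empCdf K y t.1 - t.1) / Real.sqrt (t.1 * (1 - t.1))|) := by
  have hev : ∀ᶠ m in 𝓝[>] (0 : ℝ), (∀ i, m ≤ y i ∧ m ≤ 1 - y i) ∧ m < 1 / 2 ∧ 0 < m := by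
    refine Filter.Eventually.and (Filter.eventually_all.2 fun i => ?_) (Filter.Eventually.and ?_ ?_)
    · exact nhdsWithin_le_nhds
        ((eventually_le_nhds (hy i).1).and (eventually_le_nhds (by linarith [(hy i).2])))
    · exact nhdsWithin_le_nhds (eventually_lt_nhds (by norm_num))
    · exact self_mem_nhdsWithin
  obtain ⟨m, hm, hm2, hm0⟩ := hev.exists
  refine ⟨√K * (2 / m), ?_⟩
  rintro _ ⟨⟨t, ht0, ht1⟩, rfl⟩
  change |√K * (empCdf K y t - t) / √(t * (1 - t))| ≤ _
  have hp : 0 < t * (1 - t) := mul_pos ht0 (by linarith)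
  have hsp := Real.sqrt_pos.2 hp
  rcases Nat.eq_zero_or_pos K with hK | hK
  · subst hK; simp
  have hKr : (0 : ℝ) < K := by exact_mod_cast hK
  have hmain : |empCdf K y t - t| ≤ 2 / m * (t * (1 - t)) := by
    have h2m : 4 ≤ 2 / m := by rw [le_div_iff₀ hm0]; linarith
    have hF0 : 0 ≤ empCdf K y t :=
      div_nonneg (Finset.sum_nonneg fun i _ => by split_ifs <;> norm_num) hKr.le
    have hF1 : empCdf K y t ≤ 1 := by
      unfold empCdf
      rw [div_le_one hKr]
      calc _ ≤ ∑ i : Fin K, (1 : ℝ) := Finset.sum_le_sum fun i _ => by split_ifs <;> norm_num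
        _ = K := by simp
    by_cases h1 : t < m
    · have : empCdf K y t = 0 := by
        unfold empCdf
        rw [Finset.sum_eq_zero, zero_div]
        intro i _
        rw [if_neg]
        linarith [(hm i).1]
      rw [this, zero_sub, abs_neg, abs_of_pos ht0]
      nlinarith
    by_cases h2 : 1 - m ≤ t
    · have : empCdf K y t = 1 := by
        unfold empCdf
        rw [div_eq_one_iff_eq hKr.ne', Finset.sum_congr rfl (g := fun _ => (1 : ℝ))]
        · simp
        intro i _
        rw [if_pos]
        linarith [(hm i).2]
      rw [this, abs_of_pos (by linarith)]
      nlinarith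
    · push Not at h1 h2
      have h3 : m / 2 ≤ t * (1 - t) := by nlinarith
      have h4 : 1 ≤ 2 / m * (t * (1 - t)) := by
        calc (1 : ℝ) = 2 / m * (m / 2) := by field_simp
          _ ≤ _ := by gcongr
      refine le_trans (abs_le.2 ⟨by linarith, by linarith⟩) h4
  rw [abs_div, abs_mul, abs_of_nonneg (Real.sqrt_nonneg K), abs_of_pos hsp, div_le_iff₀ hsp,
    mul_assoc]
  refine mul_le_mul_of_nonneg_left (hmain.trans ?_) (Real.sqrt_nonneg _)
  have h5 : t * (1 - t) ≤ √(t * (1 - t)) := by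
    have h6 : √(t * (1 - t)) ≤ 1 := by
      rw [Real.sqrt_le_one]; nlinarith
    nlinarith [Real.sq_sqrt hp.le]
  gcongr

theorem aux_HC {K : ℕ} (hK : 0 < K) (y : Fin K → ℝ) (hy : ∀ i, y i ∈ Set.Ioo (0 : ℝ) 1)
    (t : ℝ) (ht : t ∈ Set.Ioo (0 : ℝ) 1) :
    |(∑ i : Fin K, if y i ≤ t then (1 : ℝ) else 0) - K * t| ≤
      HCstat K y * √(K * (t * (1 - t))) := by
  have hKr : (0 : ℝ) < K := by exact_mod_cast hK
  have h := le_ciSup (aux_bdd y hy) ⟨t, ht⟩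
  change |√K * (empCdf K y t - t) / √(t * (1 - t))| ≤ HCstat K y at h
  have hp : 0 < t * (1 - t) := mul_pos ht.1 (by linarith [ht.2])
  have hsp := Real.sqrt_pos.2 hp
  have hsK := Real.sqrt_pos.2 hKr
  rw [abs_div, abs_mul, abs_of_pos hsK, abs_of_pos hsp, div_le_iff₀ hsp] at h
  have e : (∑ i : Fin K, if y i ≤ t then (1 : ℝ) else 0) - K * t = K * (empCdf K y t - t) := by
    unfold empCdf; field_simp
  rw [e, abs_mul, abs_of_pos hKr, Real.sqrt_mul hKr.le]
  calc (K : ℝ) * |empCdf K y t - t| = √K * (√K * |empCdf K y t - t|) := by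
        rw [← mul_assoc, Real.mul_self_sqrt hKr.le]
    _ ≤ √K * (HCstat K y * √(t * (1 - t))) := by gcongr
    _ = _ := by ring

theorem aux_real (μ : Measure ℝ) [IsProbabilityMeasure μ] (e : ℝ) (he : e ∈ Set.Icc (0 : ℝ) 1)
    (A : Set ℝ) (w : ℝ) (hw : unif.real A = w) :
    (Qmix unif μ e).real A = w + e * ((μ A).toReal - w) := by
  have hf : IsFiniteMeasure unif := ⟨by simp [unif]⟩
  unfold Qmix
  rw [measureReal_def, Measure.add_apply, Measure.smul_apply, Measure.smul_apply, smul_eq_mul,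
    smul_eq_mul, ENNReal.toReal_add
      (ENNReal.mul_ne_top ENNReal.ofReal_ne_top (measure_ne_top _ _))
      (ENNReal.mul_ne_top ENNReal.ofReal_ne_top (measure_ne_top _ _)), ENNReal.toReal_mul,
    ENNReal.toReal_mul, ENNReal.toReal_ofReal he.1, ENNReal.toReal_ofReal (by linarith [he.2])]
  rw [measureReal_def] at hw
  rw [hw]; ring

theorem aux_prob (μ : Measure ℝ) [IsProbabilityMeasure μ] (e : ℝ) (he : e ∈ Set.Icc (0 : ℝ) 1) :
    IsProbabilityMeasure (Qmix unif μ e) := by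
  constructor
  simp only [Qmix, unif, Measure.add_apply, Measure.smul_apply, smul_eq_mul, measure_univ,
    Measure.restrict_apply_univ, Real.volume_Ioo, sub_zero, ENNReal.ofReal_one, mul_one]
  rw [← ENNReal.ofReal_add (by linarith [he.2]) he.1]
  simp

theorem aux_ae (μ : Measure ℝ) [IsProbabilityMeasure μ] (hμ : μ (Set.Ioo (0 : ℝ) 1) = 1) (e : ℝ) :
    ∀ᵐ x ∂(Qmix unif μ e), x ∈ Set.Ioo (0 : ℝ) 1 := by
  have h1 : μ (Set.Ioo (0 : ℝ) 1)ᶜ = 0 := (prob_compl_eq_zero_iff measurableSet_Ioo).2 hμ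
  have h2 : unif (Set.Ioo (0 : ℝ) 1)ᶜ = 0 := by
    rw [unif, Measure.restrict_apply measurableSet_Ioo.compl]; simp
  change Qmix unif μ e (Set.Ioo (0 : ℝ) 1)ᶜ = 0
  simp [Qmix, h1, h2]

theorem aux_bound (k : ℕ → ℕ) (μ : ℕ → ℕ → Measure ℝ) (ε : ℕ → ℕ → ℝ) (n : ℕ) (v : ℝ)
    (hμ : ∀ n i, IsProbabilityMeasure (μ n i))
    (hμ01 : ∀ n i, (μ n i) (Set.Ioo (0 : ℝ) 1) = 1)
    (hε : ∀ n i, ε n i ∈ Set.Icc (0 : ℝ) 1)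
    (hv : v ∈ Set.Ioo (0 : ℝ) (1 / 2)) (c a : ℝ) (hc : 0 < c) (hcv : c ≤ (k n : ℝ) * v)
    (ha : 0 ≤ a) (hH : 0 < Hfun μ ε k n v) (hHa : 8 * a ≤ Hfun μ ε k n v) :
    ((QprodU μ ε k n) {y | HCstat (k n) y ≤ 2 * a}).toReal ≤
      16 / (Hfun μ ε k n v) ^ 2 + 8 / (Hfun μ ε k n v * √c) := by
  have hKr : (0 : ℝ) < k n := by
    rcases Nat.eq_zero_or_pos (k n) with h | h
    · rw [h] at hcv; simp at hcv; linarith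
    · exact_mod_cast h
  have hK : 0 < k n := by exact_mod_cast hKr
  have hp : ∀ i : Fin (k n), IsProbabilityMeasure (Qmix unif (μ n i) (ε n i)) :=
    fun i => have := hμ n i; aux_prob _ _ (hε n i)
  have hae : ∀ᵐ y ∂(QprodU μ ε k n), ∀ i, y i ∈ Set.Ioo (0 : ℝ) 1 := by
    refine ae_all_iff.2 fun i => ?_
    have := hμ n i
    exact Measure.tendsto_eval_ae_ae.eventually (aux_ae (μ n i) (hμ01 n i) (ε n i))
  set H := Hfun μ ε k n v with hHdef
  have hx : 0 < (k n : ℝ) * v := hc.trans_le hcv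
  have hs := Real.sqrt_pos.2 hx
  have hbd : ∀ y : Fin (k n) → ℝ, HCstat (k n) y ≤ 2 * a →
      HCstat (k n) y * √(k n * (v * (1 - v))) ≤ 2 * a * √(k n * v) := by
    intro y hy
    refine mul_le_mul hy (Real.sqrt_le_sqrt ?_) (Real.sqrt_nonneg _) (by positivity)
    have := hv.1
    nlinarith [mul_pos hx this]
  have hsumA : ∀ A : Set ℝ, unif.real A = v →
      ∑ i : Fin (k n), (Qmix unif (μ n i) (ε n i)).real A = k n * v +
        ∑ i ∈ Finset.range (k n), ε n i * (((μ n i) A).toReal - v) := by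
    intro A hA
    have h : ∀ i : Fin (k n), (Qmix unif (μ n i) (ε n i)).real A =
        v + ε n i * (((μ n i) A).toReal - v) := fun i =>
      have := hμ n i
      aux_real (μ n i) (ε n i) (hε n i) A v hA
    simp only [h]
    rw [Finset.sum_range, Finset.sum_add_distrib]
    simp
  have huA : unif.real (Set.Ioc 0 v) = v := by
    rw [measureReal_def, unif, Measure.restrict_apply measurableSet_Ioc,
      Set.inter_eq_left.2 (show Set.Ioc 0 v ⊆ Set.Ioo (0 : ℝ) 1 from
        fun x hx => ⟨hx.1, by linarith [hx.2, hv.2]⟩), Real.volume_Ioc,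
      sub_zero, ENNReal.toReal_ofReal hv.1.le]
  have huB : unif.real (Set.Ioo (1 - v) 1) = v := by
    rw [measureReal_def, unif, Measure.restrict_apply measurableSet_Ioo,
      Set.inter_eq_left.2 (show Set.Ioo (1 - v) 1 ⊆ Set.Ioo (0 : ℝ) 1 from
        fun x hx => ⟨by linarith [hx.1, hv.2], hx.2⟩), Real.volume_Ioo,
      sub_sub_cancel, ENNReal.toReal_ofReal hv.1.le]
  have hHs : H * √(k n * v) =
      |∑ i ∈ Finset.range (k n), ε n i * (((μ n i) (Set.Ioc 0 v)).toReal - v)| +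
      |∑ i ∈ Finset.range (k n), ε n i * (((μ n i) (Set.Ioo (1 - v) 1)).toReal - v)| := by
    rw [hHdef, Hfun, div_mul_cancel₀ _ hs.ne']
  rcases le_total (H / 2 * √(k n * v))
    |∑ i ∈ Finset.range (k n), ε n i * (((μ n i) (Set.Ioc 0 v)).toReal - v)| with hD | hD
  · refine aux_core _ (Set.Ioc 0 v) measurableSet_Ioc v _ a H c hc hcv (hsumA _ huA) hH hHa hD _ ?_
    filter_upwards [hae] with y hy hyE
    have h := (aux_HC hK y hy v ⟨hv.1, by linarith [hv.2]⟩).trans (hbd y hyE)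
    have e : ∑ i : Fin (k n), (Set.Ioc 0 v).indicator (fun _ => (1 : ℝ)) (y i)
        = ∑ i : Fin (k n), if y i ≤ v then (1 : ℝ) else 0 := by
      refine Finset.sum_congr rfl fun i _ => ?_
      by_cases hi : y i ≤ v
      · rw [Set.indicator_of_mem (show y i ∈ Set.Ioc 0 v from ⟨(hy i).1, hi⟩), if_pos hi]
      · rw [Set.indicator_of_notMem (fun h => hi h.2), if_neg hi]
    rw [e]
    exact h
  · refine aux_core _ (Set.Ioo (1 - v) 1) measurableSet_Ioo v _ a H c hc hcv (hsumA _ huB) hH hHa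
      (by linarith) _ ?_
    filter_upwards [hae] with y hy hyE
    have h := aux_HC hK y hy (1 - v) ⟨by linarith [hv.2], by linarith [hv.1]⟩
    rw [sub_sub_cancel, mul_comm (1 - v) v] at h
    refine le_trans (le_of_eq ?_) (h.trans (hbd y hyE))
    rw [← abs_neg]
    congr 1
    have : ∑ i : Fin (k n), (Set.Ioo (1 - v) 1).indicator (fun _ => (1 : ℝ)) (y i)
        = ∑ i : Fin (k n), (1 - if y i ≤ 1 - v then (1 : ℝ) else 0) := by
      refine Finset.sum_congr rfl fun i _ => ?_
      by_cases hi : y i ≤ 1 - v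
      · rw [Set.indicator_of_notMem (fun h => absurd h.1 (not_lt.2 hi)), if_pos hi]; simp
      · rw [Set.indicator_of_mem (show y i ∈ Set.Ioo (1 - v) 1 from ⟨not_le.1 hi, (hy i).2⟩), if_neg hi]; simp
    rw [this, Finset.sum_sub_distrib]
    simp
    ring

noncomputable section

/-- completely detectable by higher criticism: if `H_n(v_n)/a_n → ∞`
and `liminf k_n v_n > 0`, then `a_n·HC_n − b_n → ∞` in `Q_(n)`-probability. -/
theorem statement8
    (k : ℕ → ℕ) (μ : ℕ → ℕ → Measure ℝ) (ε : ℕ → ℕ → ℝ) (v : ℕ → ℝ)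
    (hk : Tendsto k atTop atTop)
    (hμ : ∀ n i, IsProbabilityMeasure (μ n i))
    (hμ01 : ∀ n i, (μ n i) (Set.Ioo (0 : ℝ) 1) = 1)
    (hε : ∀ n i, ε n i ∈ Set.Icc (0 : ℝ) 1)
    (hεmax : Tendsto (fun n => ⨆ i : Fin (k n), ε n i) atTop (nhds 0))
    (hv : ∀ n, v n ∈ Set.Ioo (0 : ℝ) (1 / 2))
    (hH : Tendsto (fun n => Hfun μ ε k n (v n) / aHC (k n)) atTop atTop)
    (hkv : ∃ c : ℝ, 0 < c ∧ ∀ᶠ n in atTop, c ≤ (k n : ℝ) * v n) :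
    ∀ C : ℝ,
      Tendsto (fun n =>
          ((QprodU μ ε k n) {y | aHC (k n) * HCstat (k n) y - bHC (k n) ≤ C}).toReal)
        atTop (nhds 0) := by
  intro C
  obtain ⟨c, hc, hcv⟩ := hkv
  have hL : Tendsto (fun n => Real.log (Real.log (k n : ℝ))) atTop atTop :=
    Real.tendsto_log_atTop.comp (Real.tendsto_log_atTop.comp
      (tendsto_natCast_atTop_atTop.comp hk))
  have ha : Tendsto (fun n => aHC (k n)) atTop atTop :=
    Real.tendsto_sqrt_atTop.comp (hL.const_mul_atTop (by norm_num : (0 : ℝ) < 2))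
  have hHt : Tendsto (fun n => Hfun μ ε k n (v n)) atTop atTop := by
    refine (hH.atTop_mul_atTop₀ ha).congr' ?_
    filter_upwards [ha.eventually_gt_atTop 0] with n hn
    exact div_mul_cancel₀ _ hn.ne'
  have hb : Tendsto (fun n => 16 / (Hfun μ ε k n (v n)) ^ 2 + 8 / (Hfun μ ε k n (v n) * √c))
      atTop (nhds 0) := by
    have h1 : Tendsto (fun n => 16 / (Hfun μ ε k n (v n)) ^ 2) atTop (nhds 0) :=
      ((tendsto_pow_atTop two_ne_zero).comp hHt).const_div_atTop 16
    have h2 : Tendsto (fun n => 8 / (Hfun μ ε k n (v n) * √c)) atTop (nhds 0) :=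
      (hHt.atTop_mul_const (Real.sqrt_pos.2 hc)).const_div_atTop 8
    simpa using h1.add h2
  refine squeeze_zero' (Eventually.of_forall fun n => ENNReal.toReal_nonneg) ?_ hb
  filter_upwards [hcv, hL.eventually_gt_atTop 0, hL.eventually_ge_atTop C,
    ha.eventually_gt_atTop 0, hHt.eventually_gt_atTop 0, hH.eventually_ge_atTop 8]
    with n h1 h2 h3 h4 h5 h6
  have h7 : 8 * aHC (k n) ≤ Hfun μ ε k n (v n) := (le_div_iff₀ h4).1 h6
  refine le_trans ?_ (aux_bound k μ ε n (v n) hμ hμ01 hε (hv n) c (aHC (k n)) hc h1 h4.le h5 h7)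
  have hp : ∀ i : Fin (k n), IsProbabilityMeasure (Qmix unif (μ n i) (ε n i)) :=
    fun i => have := hμ n i; aux_prob _ _ (hε n i)
  have hfin : IsFiniteMeasure (QprodU μ ε k n) := by unfold QprodU; infer_instance
  refine ENNReal.toReal_mono (measure_ne_top _ _) (measure_mono fun y hy => ?_)
  change aHC (k n) * HCstat (k n) y - bHC (k n) ≤ C at hy
  change HCstat (k n) y ≤ 2 * aHC (k n)
  have h8 : aHC (k n) ^ 2 = 2 * Real.log (Real.log (k n)) := Real.sq_sqrt (by linarith)
  have h9 : bHC (k n) ≤ 3 * Real.log (Real.log (k n)) := by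
    unfold bHC
    have := Real.log_le_self h2.le
    have hpi : 0 ≤ Real.log Real.pi := Real.log_nonneg (by linarith [Real.pi_gt_three])
    linarith
  refine le_of_mul_le_mul_left ?_ h4
  nlinarith

end
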